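/- arXiv:1307.0733 — 2 statements merged into one kernel-verified Lean document; each statement's English description precedes it below -/
import Mathlib

section
/- Let S be a commutative unital ring of characteristic ℓ ≥ 0, and let UT_2(S) denote the ring of upper triangular 2×2 matrices over S. Then for every n ≥ 2 there is an isomorphism of abelian groups P_n(ℤ)/(P_n(ℤ) ∩ Id(UT_2(S),ℤ)) ≅ (ℤ/ℓℤ) ⊕ (ℤ/ℓℤ)^{(n−2)·2^{n−1}+1}, where ℤ/0ℤ = ℤ. -/
/-- The free unital associative ring `ℤ⟨x_1, x_2, …⟩` on countably many
(0-indexed) variables. -/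
abbrev FA : Type := FreeAlgebra ℤ ℕ

/-- The variable `x_{i+1}` (0-indexed: `X i`). -/
noncomputable def X (i : ℕ) : FA := FreeAlgebra.ι ℤ i

/-- `P_n(ℤ)`: the additive subgroup of `ℤ⟨X⟩` generated by the multilinear monomials
`x_{σ(1)} x_{σ(2)} ⋯ x_{σ(n)}`, `σ ∈ S_n` (variables 0-indexed). -/
noncomputable def Pn (n : ℕ) : AddSubgroup FA :=
  AddSubgroup.closure
    {w | ∃ σ : Equiv.Perm (Fin n), w = (List.ofFn fun i => X (σ i)).prod}

/-- `Id(R, ℤ)` (inside the free algebra): the elements vanishing under every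
substitution of elements of `R` for the variables. -/
noncomputable def IdA (R : Type*) [Ring R] : AddSubgroup FA where
  carrier := {f | ∀ v : ℕ → R, FreeAlgebra.lift ℤ v f = 0}
  zero_mem' := fun v => map_zero _
  add_mem' := fun hf hg v => by rw [map_add, hf v, hg v, add_zero]
  neg_mem' := fun hf v => by rw [map_neg, hf v, neg_zero]

/-- Left-normed iterated commutator: `commList a [b₁, …, b_k] = [a, b₁, …, b_k]`
(`commList a [] = a`), where `[a,b] = ab - ba`. -/
def commList {A : Type*} [NonUnitalRing A] : A → List A → A
  | a, [] => a
  | a, b :: l => commList (a * b - b * a) l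

/-- The left-normed long commutator `[x_{i₁}, …, x_{i_k}]` of a list of variable
indices (junk value `0` for the empty list). -/
noncomputable def lcWord : List ℕ → FA
  | [] => 0
  | a :: l => commList (X a) l

/-- `Γ_n(ℤ)`: the additive subgroup of `P_n(ℤ)` generated by the proper multilinear
polynomials: products `c₁ c₂ ⋯ c_r` of long commutators (each of length ≥ 2) in which
each of the `n` variables occurs exactly once. -/
noncomputable def Gamma (n : ℕ) : AddSubgroup FA :=
  AddSubgroup.closure
    {w | ∃ L : List (List (Fin n)),
      (∀ l ∈ L, 2 ≤ l.length) ∧ L.flatten.Perm (List.finRange n) ∧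
      w = (L.map fun l => lcWord (l.map Fin.val)).prod}

/-- The two-sided ideal of the (unital) ring `FA` generated by a set `S`:
the additive subgroup generated by all products `a * s * b`, `s ∈ S`. -/
noncomputable def tsIdeal (S : Set FA) : AddSubgroup FA :=
  AddSubgroup.closure {w | ∃ a s b : FA, s ∈ S ∧ w = a * s * b}

/-- Renaming of variables: the endomorphism of `FA` sending `x_i ↦ x_{π(i)}` for the
first `n` variables (and fixing the remaining ones), for `π ∈ S_n`. -/
noncomputable def rename {n : ℕ} (π : Equiv.Perm (Fin n)) : FA →ₐ[ℤ] FA :=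
  FreeAlgebra.lift ℤ (fun i => if h : i < n then X (π ⟨i, h⟩) else X i)

/-- The ring of upper triangular `2 × 2` matrices over `S`, as a subring of `M_2(S)`. -/
def UT2 (S : Type*) [CommRing S] : Subring (Matrix (Fin 2) (Fin 2) S) where
  carrier := {M | M 1 0 = 0}
  zero_mem' := rfl
  one_mem' := Matrix.one_apply_ne (by decide)
  add_mem' := by
    intro a b ha hb
    show (a + b) 1 0 = 0
    simp only [Matrix.add_apply]
    rw [ha, hb, add_zero]
  neg_mem' := by
    intro a ha
    show (-a) 1 0 = 0
    simp only [Matrix.neg_apply]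
    rw [ha, neg_zero]
  mul_mem' := by
    intro a b ha hb
    show (a * b) 1 0 = 0
    rw [Matrix.mul_apply, Fin.sum_univ_two, ha, hb, zero_mul, mul_zero, add_zero]

/-- Evaluation of noncommutative polynomials, as a ring homomorphism. -/
noncomputable def evalAt {A : Type*} [Ring A] (v : ℕ → A) : FA →+* A :=
  (FreeAlgebra.lift ℤ v).toRingHom

theorem evalAt_X {A : Type*} [Ring A] (v : ℕ → A) (i : ℕ) : evalAt v (X i) = v i :=
  FreeAlgebra.lift_ι_apply v i

theorem map_evalAt {A B : Type*} [Ring A] [Ring B] (g : A →+* B) (v : ℕ → A) (f : FA) :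
    g (evalAt v f) = evalAt (fun i => g (v i)) f := by
  have h : g.toIntAlgHom.comp (FreeAlgebra.lift ℤ v) =
      FreeAlgebra.lift ℤ (fun i => g (v i)) := by
    ext i
    simp
  exact DFunLike.congr_fun h f

/-- The multilinear monomial `x_{σ(1)} ⋯ x_{σ(n)}`. -/
noncomputable def monomialOf {n : ℕ} (σ : Equiv.Perm (Fin n)) : FA :=
  (List.ofFn fun i => X (σ i)).prod

theorem monomialOf_mem {n : ℕ} (σ : Equiv.Perm (Fin n)) : monomialOf σ ∈ Pn n :=
  AddSubgroup.subset_closure ⟨σ, rfl⟩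

theorem evalAt_monomialOf {A : Type*} [Ring A] {n : ℕ} (v : ℕ → A) (σ : Equiv.Perm (Fin n)) :
    evalAt v (monomialOf σ) = (List.ofFn fun i => v (σ i)).prod := by
  rw [monomialOf, map_list_prod, List.map_ofFn]
  simp [Function.comp_def, evalAt_X]

theorem prod_ofFn_upper {R : Type*} [CommRing R] {n : ℕ} (M : Fin n → Matrix (Fin 2) (Fin 2) R)
    (hM : ∀ i, M i 1 0 = 0) :
    (List.ofFn M).prod 1 0 = 0 ∧ (List.ofFn M).prod 0 0 = ∏ i, M i 0 0 ∧
    (List.ofFn M).prod 1 1 = ∏ i, M i 1 1 ∧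
    (List.ofFn M).prod 0 1 =
      ∑ k, ∏ i, if i < k then M i 0 0 else if i = k then M i 0 1 else M i 1 1 := by
  induction n with
  | zero => simp
  | succ n ih =>
    obtain ⟨h1, h2, h3, h4⟩ := ih (fun i => M i.succ) fun i => hM _
    simp only [List.ofFn_succ, List.prod_cons, Matrix.mul_apply, Fin.sum_univ_two, h1, h2, h3, h4,
      hM]
    refine ⟨by simp, by simp [Fin.prod_univ_succ], by simp [Fin.prod_univ_succ], ?_⟩
    rw [Fin.sum_univ_succ]
    simp [Fin.prod_univ_succ, Finset.mul_sum, Fin.succ_ne_zero, add_comm]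

/-- The set of variables strictly preceding `x_j` in the monomial of `σ`. -/
def preceding {n : ℕ} (σ : Equiv.Perm (Fin n)) (j : Fin n) : Finset (Fin n) :=
  Finset.univ.filter fun x => σ.symm x < σ.symm j

/-- The product of the diagonal entries `M_x(0,0)`, `x ∈ A`, the entry `M_j(0,1)` and the
remaining `M_x(1,1)`. -/
def cutProd {R : Type*} [CommRing R] {n : ℕ} (M : ℕ → Matrix (Fin 2) (Fin 2) R)
    (A : Finset (Fin n)) (j : Fin n) : R :=
  ∏ x : Fin n, if x ∈ A then M x 0 0 else if x = j then M x 0 1 else M x 1 1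

theorem evalAt_monomialOf_corner {R : Type*} [CommRing R] {n : ℕ}
    (M : ℕ → Matrix (Fin 2) (Fin 2) R) (hM : ∀ i, M i 1 0 = 0) (σ : Equiv.Perm (Fin n)) :
    evalAt M (monomialOf σ) 0 1 = ∑ j, cutProd M (preceding σ j) j := by
  rw [evalAt_monomialOf, (prod_ofFn_upper _ fun i => hM _).2.2.2,
    ← Equiv.sum_comp σ fun j => cutProd M (preceding σ j) j]
  refine Finset.sum_congr rfl fun k _ => ?_
  rw [cutProd, ← Equiv.prod_comp σ fun x => if x ∈ preceding σ (σ k) then M x 0 0 else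
    if x = σ k then M x 0 1 else M x 1 1]
  simp [preceding]

/-- The substitution `x_i ↦ e₁₁` for `i ∈ A`, `x_j ↦ e₁₂`, and `x_i ↦ e₂₂` otherwise. -/
def edgeSubst (R : Type*) [CommRing R] {n : ℕ} (A : Finset (Fin n)) (j : Fin n) (i : ℕ) :
    Matrix (Fin 2) (Fin 2) R :=
  if h : i < n then
    if ⟨i, h⟩ ∈ A then !![1, 0; 0, 0] else if ⟨i, h⟩ = j then !![0, 1; 0, 0] else !![0, 0; 0, 1]
  else 0

theorem edgeSubst_lower {R : Type*} [CommRing R] {n : ℕ} (A : Finset (Fin n)) (j : Fin n) (i : ℕ) :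
    edgeSubst R A j i 1 0 = 0 := by
  unfold edgeSubst
  split_ifs <;> rfl

/-- The sum of the coefficients of the monomials in which `x_j` is preceded exactly by the
variables in `A`. -/
noncomputable def edgeCoeff (R : Type*) [CommRing R] {n : ℕ} (A : Finset (Fin n)) (j : Fin n) :
    FA →+ R where
  toFun f := evalAt (edgeSubst R A j) f 0 1
  map_zero' := by simp
  map_add' := by simp

theorem edgeCoeff_monomialOf {R : Type*} [CommRing R] {n : ℕ} (A : Finset (Fin n)) (j : Fin n)
    (σ : Equiv.Perm (Fin n)) :
    edgeCoeff R A j (monomialOf σ) = if A = preceding σ j then 1 else 0 := by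
  change evalAt (edgeSubst R A j) (monomialOf σ) 0 1 = _
  rw [evalAt_monomialOf_corner _ (edgeSubst_lower A j)]
  have key : ∀ (B : Finset (Fin n)) (k : Fin n), k ∉ B →
      cutProd (edgeSubst R A j) B k = if k = j ∧ A = B then 1 else 0 := by
    intro B k hk
    have : ∀ x : Fin n, (if x ∈ B then edgeSubst R A j x 0 0 else
        if x = k then edgeSubst R A j x 0 1 else edgeSubst R A j x 1 1) =
        if (x ∈ B → x ∈ A) ∧ (x = k → x ∉ A ∧ x = j) ∧ (x ∉ B → x ≠ k → x ∉ A ∧ x ≠ j)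
          then 1 else 0 := by
      intro x
      simp only [edgeSubst, x.2, dif_pos, Fin.eta]
      by_cases h1 : x ∈ B <;> by_cases h2 : x ∈ A <;> by_cases h3 : x = k <;>
        by_cases h4 : x = j <;> simp_all
    rw [cutProd, Finset.prod_congr rfl fun x _ => this x, Finset.prod_ite_zero]
    simp only [Finset.prod_const_one, Finset.mem_univ, true_implies]
    congr 1
    apply propext
    constructor
    · intro h
      have hkj := ((h k).2.1 rfl).2
      refine ⟨hkj, Finset.ext fun x => ⟨fun hx => ?_, (h x).1⟩⟩
      by_contra hB
      by_cases hxk : x = k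
      · exact ((h x).2.1 hxk).1 hx
      · exact ((h x).2.2 hB hxk).1 hx
    · rintro ⟨rfl, rfl⟩ x
      refine ⟨id, fun h => ⟨h ▸ hk, h⟩, fun h h' => ⟨h, h'⟩⟩
  rw [Finset.sum_congr rfl fun k _ => key (preceding σ k) k (by simp [preceding]),
    Finset.sum_eq_single j]
  · simp
  · intro k _ hk
    simp [hk]
  · simp

theorem evalAt_corner {R S : Type*} [CommRing R] [CommRing S] (g : R →+* S) {n : ℕ}
    (M : ℕ → Matrix (Fin 2) (Fin 2) S) (hM : ∀ i, M i 1 0 = 0) {f : FA} (hf : f ∈ Pn n) :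
    evalAt M f 0 1 =
      ∑ j : Fin n, ∑ A : Finset (Fin n), g (edgeCoeff R A j f) * cutProd M A j := by
  induction hf using AddSubgroup.closure_induction with
  | mem w hw =>
    obtain ⟨σ, rfl⟩ := hw
    change evalAt M (monomialOf σ) 0 1 = ∑ j : Fin n, ∑ A : Finset (Fin n),
      g (edgeCoeff R A j (monomialOf σ)) * cutProd M A j
    simp [evalAt_monomialOf_corner M hM, edgeCoeff_monomialOf, apply_ite g]
  | zero => simp
  | add x y _ _ hx hy => simp [hx, hy, add_mul, Finset.sum_add_distrib]
  | neg x _ hx => simp [hx]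

theorem preceding_eq_empty_iff {n : ℕ} (σ : Equiv.Perm (Fin (n + 1))) (j : Fin (n + 1)) :
    ∅ = preceding σ j ↔ j = σ 0 := by
  rw [eq_comm, preceding, Finset.filter_eq_empty_iff, ← Equiv.symm_apply_eq]
  constructor
  · intro h
    by_contra h'
    exact h (Finset.mem_univ (σ 0)) (by simpa using Fin.pos_of_ne_zero h')
  · intro h
    simp [h]

theorem evalAt_diag {R S : Type*} [CommRing R] [CommRing S] (g : R →+* S) {n : ℕ} (hn : n ≠ 0)
    (M : ℕ → Matrix (Fin 2) (Fin 2) S) (hM : ∀ i, M i 1 0 = 0) {f : FA} (hf : f ∈ Pn n) :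
    evalAt M f 1 0 = 0 ∧
    evalAt M f 0 0 = (∑ j : Fin n, g (edgeCoeff R ∅ j f)) * ∏ x : Fin n, M x 0 0 ∧
    evalAt M f 1 1 = (∑ j : Fin n, g (edgeCoeff R ∅ j f)) * ∏ x : Fin n, M x 1 1 := by
  obtain ⟨n, rfl⟩ := Nat.exists_eq_succ_of_ne_zero hn
  induction hf using AddSubgroup.closure_induction with
  | mem w hw =>
    obtain ⟨σ, rfl⟩ := hw
    obtain ⟨h1, h2, h3, -⟩ := prod_ofFn_upper (fun i => M (σ i)) fun i => hM _
    rw [← evalAt_monomialOf M σ] at h1 h2 h3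
    refine ⟨h1, ?_, ?_⟩
    · refine (h2.trans (Equiv.prod_comp σ fun x => M x 0 0)).trans ?_
      change _ = (∑ j, g (edgeCoeff R ∅ j (monomialOf σ))) * _
      simp [edgeCoeff_monomialOf, apply_ite g, preceding_eq_empty_iff]
    · refine (h3.trans (Equiv.prod_comp σ fun x => M x 1 1)).trans ?_
      change _ = (∑ j, g (edgeCoeff R ∅ j (monomialOf σ))) * _
      simp [edgeCoeff_monomialOf, apply_ite g, preceding_eq_empty_iff]
  | zero => simp
  | add x y _ _ hx hy => simp [hx, hy, add_mul, Finset.sum_add_distrib]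
  | neg x _ hx => simp [hx]

theorem mem_IdA_UT2_iff {R S : Type*} [CommRing R] [CommRing S] (g : R →+* S)
    (hg : Function.Injective g) {n : ℕ} (hn : n ≠ 0) {f : FA} (hf : f ∈ Pn n) :
    f ∈ IdA (UT2 S) ↔ ∀ (A : Finset (Fin n)) (j : Fin n), edgeCoeff R A j f = 0 := by
  constructor
  · intro h A j
    have h0 : evalAt (fun i => (⟨edgeSubst S A j i, edgeSubst_lower A j i⟩ : UT2 S)) f = 0 := h _
    have h1 := congrArg (UT2 S).subtype h0
    rw [map_evalAt, map_zero] at h1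
    change evalAt (edgeSubst S A j) f = 0 at h1
    apply hg
    rw [map_zero]
    have h2 := map_evalAt g.mapMatrix (edgeSubst R A j) f
    have h3 : (fun i => g.mapMatrix (edgeSubst R A j i)) = edgeSubst S A j := by
      funext i
      unfold edgeSubst
      split_ifs <;> ext a b <;> fin_cases a <;> fin_cases b <;> simp
    rw [h3, h1] at h2
    exact congrFun (congrFun h2 0) 1
  · intro h v
    change evalAt v f = 0
    apply (UT2 S).subtype_injective
    rw [map_evalAt, map_zero]
    have hM : ∀ i, ((UT2 S).subtype (v i)) 1 0 = 0 := fun i => (v i).2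
    have h01 := evalAt_corner g _ hM hf
    obtain ⟨h10, h00, h11⟩ := evalAt_diag g hn _ hM hf
    simp only [h, map_zero, zero_mul, Finset.sum_const_zero] at h01 h00 h11
    ext a b
    fin_cases a <;> fin_cases b
    · exact h00
    · exact h01
    · exact h10
    · exact h11

theorem sum_edgeCoeff_eq {R : Type*} [CommRing R] {n : ℕ} {A : Finset (Fin n)} (hA : A.Nonempty)
    (hA' : A ≠ Finset.univ) {f : FA} (hf : f ∈ Pn n) :
    ∑ j, edgeCoeff R A j f = ∑ j ∈ A, edgeCoeff R (A.erase j) j f := by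
  induction hf using AddSubgroup.closure_induction with
  | mem w hw =>
    obtain ⟨σ, rfl⟩ := hw
    change ∑ j, edgeCoeff R A j (monomialOf σ) =
      ∑ j ∈ A, edgeCoeff R (A.erase j) j (monomialOf σ)
    let P : ℕ → Finset (Fin n) := fun k => Finset.univ.filter fun x => (σ.symm x).val < k
    have hP : ∀ k : Fin n, preceding σ (σ k) = P k := fun k => by
      ext x
      simp [preceding, P]
    have hP' : ∀ k : Fin n, (σ k ∈ A ∧ A.erase (σ k) = P k) ↔ A = P (k + 1) := fun k => by
      have hins : P (k + 1) = insert (σ k) (P k) := by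
        ext x
        simp only [P, Finset.mem_filter, Finset.mem_univ, true_and, Finset.mem_insert,
          Nat.lt_succ_iff, ← Equiv.symm_apply_eq, Fin.ext_iff]
        omega
      have hk : σ k ∉ P k := by simp [P]
      rw [hins]
      constructor
      · rintro ⟨h, h'⟩
        rw [← h', Finset.insert_erase h]
      · rintro rfl
        exact ⟨Finset.mem_insert_self _ _, Finset.erase_insert hk⟩
    simp only [edgeCoeff_monomialOf]
    have hl : ∑ j, (if A = preceding σ j then (1 : R) else 0) =
        ∑ k ∈ Finset.range n, if A = P k then 1 else 0 := by
      rw [← Equiv.sum_comp σ, Finset.sum_range]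
      simp only [hP]
    have hr : ∑ j ∈ A, (if A.erase j = preceding σ j then (1 : R) else 0) =
        ∑ k ∈ Finset.range n, if A = P (k + 1) then 1 else 0 := by
      rw [← Finset.univ_inter A, ← Finset.sum_ite_mem, ← Equiv.sum_comp σ, Finset.sum_range]
      simp only [hP, ← hP', Finset.univ_inter, ite_and]
    have h0 : A ≠ P 0 := by simpa [P] using hA.ne_empty
    have h1 : A ≠ P n := by simpa [P] using hA'
    rw [hl, hr, ← sub_eq_zero, ← Finset.sum_sub_distrib,
      Finset.sum_range_sub' fun k => if A = P k then (1 : R) else 0, if_neg h0, if_neg h1, sub_zero]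
  | zero => simp
  | add x y _ _ hx hy => simp [hx, hy, Finset.sum_add_distrib]
  | neg x _ hx => simp [hx]

theorem edgeCoeff_eq_zero_of_mem {R : Type*} [CommRing R] {n : ℕ} {A : Finset (Fin n)} {j : Fin n}
    (hj : j ∈ A) {f : FA} (hf : f ∈ Pn n) : edgeCoeff R A j f = 0 := by
  induction hf using AddSubgroup.closure_induction with
  | mem w hw =>
    obtain ⟨σ, rfl⟩ := hw
    refine (edgeCoeff_monomialOf A j σ).trans (if_neg ?_)
    rintro rfl
    simp [preceding] at hj
  | zero => simp
  | add x y _ _ hx hy => simp [hx, hy]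
  | neg x _ hx => simp [hx]

/-- The edges `(A, A ∪ {j})` of the Boolean lattice lying outside the spanning tree formed by the
edges `(A, A ∪ {min Aᶜ})` with `A` nonempty. -/
def cotree (n : ℕ) : Finset (Finset (Fin n) × Fin n) :=
  Finset.univ.filter fun e => e.2 ∉ e.1 ∧ (e.1 = ∅ ∨ ∃ i, i ∉ e.1 ∧ i < e.2)

theorem mem_cotree {n : ℕ} {A : Finset (Fin n)} {j : Fin n} :
    (A, j) ∈ cotree n ↔ j ∉ A ∧ (A = ∅ ∨ ∃ i, i ∉ A ∧ i < j) := by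
  simp [cotree]

theorem edgeCoeff_eq_zero_of_cotree {R : Type*} [CommRing R] {n : ℕ} {f : FA} (hf : f ∈ Pn n)
    (h : ∀ e ∈ cotree n, edgeCoeff R e.1 e.2 f = 0) (A : Finset (Fin n)) (j : Fin n) :
    edgeCoeff R A j f = 0 := by
  induction A using Finset.strongInduction generalizing j with
  | H A ih =>
    by_cases hjA : j ∈ A
    · exact edgeCoeff_eq_zero_of_mem hjA hf
    by_cases hT : (A, j) ∈ cotree n
    · exact h _ hT
    have hT' := hT
    rw [mem_cotree] at hT'
    push Not at hT'
    obtain ⟨hne, hmin⟩ := hT' hjA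
    have hsum := sum_edgeCoeff_eq (R := R) hne
      (fun hu => hjA (hu ▸ Finset.mem_univ j)) hf
    rw [Finset.sum_eq_zero fun k hk => ih _ (Finset.erase_ssubset hk) k,
      Finset.sum_eq_single j] at hsum
    · exact hsum
    · intro k _ hkj
      by_cases hk : k ∈ A
      · exact edgeCoeff_eq_zero_of_mem hk hf
      · exact h _ (mem_cotree.2 ⟨hk, Or.inr ⟨j, hjA, lt_of_le_of_ne (hmin k hk) hkj.symm⟩⟩)
    · simp

theorem exists_perm_preceding {n : ℕ} (key : Fin n → ℕ) (hkey : Function.Injective key) :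
    ∃ σ : Equiv.Perm (Fin n), ∀ j, preceding σ j = Finset.univ.filter fun x => key x < key j := by
  have hmono : StrictMono (key ∘ Tuple.sort key) :=
    (Tuple.monotone_sort key).strictMono_of_injective (hkey.comp (Equiv.injective _))
  refine ⟨Tuple.sort key, fun j => Finset.filter_congr fun x _ => ?_⟩
  rw [← hmono.lt_iff_lt]
  simp

theorem exists_dual_cotree (R : Type*) [CommRing R] {n : ℕ} {A : Finset (Fin n)} {j : Fin n}
    (he : (A, j) ∈ cotree n) :
    ∃ f ∈ Pn n, ∀ e ∈ cotree n, edgeCoeff R e.1 e.2 f = if e = (A, j) then 1 else 0 := by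
  obtain ⟨hjA, -⟩ := mem_cotree.1 he
  obtain ⟨σ, hσ⟩ := exists_perm_preceding
    (fun x : Fin n => (x : ℕ) + if x ∈ A then 0 else if x = j then n else 2 * n) (by
      intro x y hxy
      have := x.2
      have := y.2
      dsimp only at hxy
      ext
      split_ifs at hxy <;> omega)
  obtain ⟨τ, hτ⟩ := exists_perm_preceding
    (fun x : Fin n => (x : ℕ) + if x ∈ A then 0 else n) (by
      intro x y hxy
      have := x.2
      have := y.2
      dsimp only at hxy
      ext
      split_ifs at hxy <;> omega)
  refine ⟨monomialOf σ - if A = ∅ then 0 else monomialOf τ, ?_, ?_⟩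
  · refine sub_mem (monomialOf_mem σ) ?_
    split_ifs
    exacts [zero_mem _, monomialOf_mem τ]
  rintro ⟨B, y⟩ hB
  obtain ⟨hyB, hB'⟩ := mem_cotree.1 hB
  rw [map_sub, edgeCoeff_monomialOf]
  by_cases hyA : y ∈ A
  · have hστ : preceding σ y = preceding τ y := by
      rw [hσ, hτ]
      ext x
      have := x.2
      have := y.2
      simp only [Finset.mem_filter, Finset.mem_univ, true_and, if_pos hyA]
      split_ifs <;> omega
    have hyj : y ≠ j := fun h => hjA (h ▸ hyA)
    rw [if_neg (Finset.ne_empty_of_mem hyA), edgeCoeff_monomialOf, hστ, sub_self, if_neg]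
    simp [hyj]
  have hτ0 : edgeCoeff R B y (if A = ∅ then 0 else monomialOf τ) = 0 := by
    split_ifs with hA
    · simp
    rw [edgeCoeff_monomialOf, if_neg]
    rintro rfl
    rw [hτ] at hB'
    rcases hB' with h | ⟨i, hi, hiy⟩
    · obtain ⟨a, ha⟩ := Finset.nonempty_iff_ne_empty.2 hA
      rw [Finset.filter_eq_empty_iff] at h
      have := h (Finset.mem_univ a)
      simp only [if_pos ha, if_neg hyA] at this
      omega
    · simp only [Finset.mem_filter, Finset.mem_univ, true_and, if_neg hyA] at hi
      split_ifs at hi <;> omega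
  rw [hτ0, sub_zero]
  by_cases hyj : y = j
  · subst hyj
    have : preceding σ y = A := by
      rw [hσ]
      ext x
      have := x.2
      simp only [Finset.mem_filter, Finset.mem_univ, true_and, if_neg hyA, if_true]
      split_ifs with h1 h2
      · simp only [h1, iff_true]
        omega
      · simp [h2, hyA]
      · simp only [h1, iff_false]
        omega
    simp [this]
  · rw [if_neg, if_neg (by simp [hyj])]
    dsimp only
    rintro rfl
    rw [hσ] at hB'
    rcases hB' with h | ⟨i, hi, hiy⟩
    · rw [Finset.filter_eq_empty_iff] at h
      have := h (Finset.mem_univ j)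
      simp only [if_neg hjA, if_neg hyA, if_neg hyj, if_true] at this
      omega
    · simp only [Finset.mem_filter, Finset.mem_univ, true_and, if_neg hyA, if_neg hyj] at hi
      split_ifs at hi <;> omega

theorem card_cotree (m : ℕ) : (cotree (m + 2)).card = m * 2 ^ (m + 1) + 1 + 1 := by
  let E : Finset (Finset (Fin (m + 2)) × Fin (m + 2)) := Finset.univ.filter fun e => e.2 ∉ e.1
  let U : Finset (Finset (Fin (m + 2)) × Fin (m + 2)) :=
    Finset.univ.filter fun e => e.1 ≠ ∅ ∧ e.2 ∉ e.1 ∧ ∀ i, i < e.2 → i ∈ e.1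
  have hE : E.card = (m + 2) * 2 ^ (m + 1) := by
    have hpow : ∀ j : Fin (m + 2), (Finset.univ.filter fun A : Finset (Fin (m + 2)) => j ∉ A) =
        (Finset.univ.erase j).powerset := fun j => by
      ext A
      simp [Finset.subset_erase]
    rw [Finset.card_filter, Fintype.sum_prod_type_right]
    simp only [← Finset.card_filter, hpow]
    simp
  have hU : U.card = 2 ^ (m + 2) - 2 := by
    have himg : U.image Prod.fst = ({∅, Finset.univ} : Finset (Finset (Fin (m + 2))))ᶜ := by
      ext A
      simp only [U, Finset.mem_image, Finset.mem_filter, Finset.mem_univ, true_and, Prod.exists,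
        exists_and_right, exists_eq_right, Finset.mem_compl, Finset.mem_insert,
        Finset.mem_singleton, not_or]
      constructor
      · rintro ⟨j, h, hj, -⟩
        exact ⟨h, fun hu => hj (hu ▸ Finset.mem_univ j)⟩
      · rintro ⟨h, hu⟩
        have hne : Aᶜ.Nonempty := by
          rwa [Finset.nonempty_iff_ne_empty, Ne, Finset.compl_eq_empty_iff]
        refine ⟨Aᶜ.min' hne, h, Finset.mem_compl.1 (Finset.min'_mem _ hne), fun i hi => ?_⟩
        by_contra hiA
        exact (Finset.min'_le _ i (Finset.mem_compl.2 hiA)).not_gt hi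
    rw [← Finset.card_image_of_injOn (f := Prod.fst) (s := U), himg, Finset.card_compl,
      Finset.card_pair (Finset.univ_nonempty.ne_empty.symm)]
    · simp
    · rintro ⟨A, i⟩ hi ⟨B, j⟩ hj rfl
      simp only [U, Finset.coe_filter, Finset.mem_univ, true_and, Set.mem_ofPred_eq] at hi hj
      have := lt_trichotomy i j
      have h1 := hi.2.2 j
      have h2 := hj.2.2 i
      grind
  have hUE : U ⊆ E := fun e he => by
    simp only [U, E, Finset.mem_filter] at he ⊢
    exact ⟨he.1, he.2.2.1⟩
  have hT : cotree (m + 2) = E \ U := by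
    ext ⟨A, j⟩
    simp only [mem_cotree, E, U, Finset.mem_sdiff, Finset.mem_filter, Finset.mem_univ, true_and]
    grind
  rw [hT, Finset.card_sdiff_of_subset hUE, hE, hU]
  have := Nat.one_le_two_pow (n := m)
  ring_nf
  omega

/-- Restriction of the coefficient sums of multilinear polynomials to the cotree. -/
noncomputable def cotreeCoeff (R : Type*) [CommRing R] (n : ℕ) : Pn n →+ (cotree n → R) :=
  AddMonoidHom.pi fun e => (edgeCoeff R e.1.1 e.1.2).comp (Pn n).subtype

theorem cotreeCoeff_apply {R : Type*} [CommRing R] {n : ℕ} (f : Pn n) (e : cotree n) :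
    cotreeCoeff R n f e = edgeCoeff R e.1.1 e.1.2 f :=
  rfl

theorem cotreeCoeff_surjective (R : Type*) [CommRing R]
    (hR : Function.Surjective (Int.cast : ℤ → R)) (n : ℕ) :
    Function.Surjective (cotreeCoeff R n) := by
  intro w
  choose f hf hfe using fun e : cotree n => exists_dual_cotree R (A := e.1.1) (j := e.1.2) e.2
  choose z hz using fun e => hR (w e)
  refine ⟨∑ e, z e • (⟨f e, hf e⟩ : Pn n), ?_⟩
  rw [map_sum]
  funext e'
  rw [Finset.sum_apply, Finset.sum_eq_single e']
  · rw [map_zsmul, Pi.smul_apply, cotreeCoeff_apply, hfe e' e' e'.2]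
    simp [hz]
  · intro e _ he
    have : (e' : Finset (Fin n) × Fin n) ≠ e := fun h => he (Subtype.ext h.symm)
    rw [map_zsmul, Pi.smul_apply, cotreeCoeff_apply, hfe e e' e'.2, if_neg this, smul_zero]
  · simp

theorem ker_cotreeCoeff {R S : Type*} [CommRing R] [CommRing S] (g : R →+* S)
    (hg : Function.Injective g) {n : ℕ} (hn : n ≠ 0) :
    (cotreeCoeff R n).ker = (IdA (UT2 S)).addSubgroupOf (Pn n) := by
  ext ⟨f, hf⟩
  rw [AddMonoidHom.mem_ker, AddSubgroup.mem_addSubgroupOf, mem_IdA_UT2_iff g hg hn hf]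
  constructor
  · exact fun h => edgeCoeff_eq_zero_of_cotree hf fun e he => congrFun h ⟨e, he⟩
  · exact fun h => funext fun e => h _ _

theorem stmt_12 (S : Type) [CommRing S] (ℓ : ℕ) (hS : CharP S ℓ) (n : ℕ) (hn : 2 ≤ n) :
    Nonempty ((Pn n ⧸ (IdA (UT2 S)).addSubgroupOf (Pn n)) ≃+
      (ZMod ℓ × (Fin ((n - 2) * 2 ^ (n - 1) + 1) → ZMod ℓ))) := by
  obtain ⟨m, rfl⟩ := Nat.exists_eq_add_of_le' hn
  rw [← ker_cotreeCoeff (ZMod.castHom (dvd_refl ℓ) S) (ZMod.castHom_injective S)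
    (Nat.succ_ne_zero _)]
  exact ⟨(QuotientAddGroup.quotientKerEquivOfSurjective _
    (cotreeCoeff_surjective (ZMod ℓ) ZMod.intCast_surjective (m + 2))).trans <|
    (LinearEquiv.funCongrLeft (ZMod ℓ) (ZMod ℓ)
      ((cotree (m + 2)).equivFinOfCardEq (card_cotree m)).symm).toAddEquiv.trans
    (Fin.consLinearEquiv (ZMod ℓ) fun _ => ZMod ℓ).symm.toAddEquiv⟩
end

section
/- Let R be a commutative unital ring whose characteristic ℓ is either an odd positive integer or 0, and let G_R be the Grassmann algebra over R (the exterior algebra of the free R-module on a countably infinite basis). Then for every n ≥ 1 there is an isomorphism of abelian groups P_n(ℤ)/(P_n(ℤ) ∩ Id(G_R,ℤ)) ≅ (ℤ/ℓℤ)^{2^{n−1}}, where ℤ/0ℤ = ℤ. -/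
/-- The sign produced by sorting a list of letters when the letters in `S` anticommute with each
other and all remaining pairs of letters commute. -/
def superSign (S : Finset ℕ) : List ℕ → ℤ
  | [] => 1
  | a :: l => (if a ∈ S then (-1) ^ l.countP (fun b => b ∈ S ∧ b < a) else 1) * superSign S l

lemma countP_erase {S : Finset ℕ} {l : List ℕ} (hl : l.Nodup) {s : ℕ} (hsl : s ∈ l)
    (hsS : s ∈ S) (a : ℕ) :
    l.countP (fun b => b ∈ S ∧ b < a) =
      l.countP (fun b => b ∈ S.erase s ∧ b < a) + if s < a then 1 else 0 := by
  induction l with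
  | nil => simp at hsl
  | cons c l ih =>
    rw [List.nodup_cons] at hl
    by_cases hcs : c = s
    · subst hcs
      have h : l.countP (fun b => b ∈ S ∧ b < a) = l.countP (fun b => b ∈ S.erase c ∧ b < a) :=
        List.countP_congr fun b hb => by
          simp [show b ≠ c from fun h => hl.1 (h ▸ hb)]
      rw [List.countP_cons, List.countP_cons, h]
      simp [hsS]
    · have ih := ih hl.2 ((List.mem_cons.1 hsl).resolve_left (Ne.symm hcs))
      rw [List.countP_cons, List.countP_cons, ih]
      simp [hcs]
      omega

/-- A family in a ring supercommutes with respect to `S` if its members with index in `S`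
anticommute with each other and its other members are central in the family. -/
structure Supercommutes {A : Type*} [Ring A] (S : Finset ℕ) (v : ℕ → A) : Prop where
  commute : ∀ i j, i ∉ S → v i * v j = v j * v i
  anticommute : ∀ i j, i ∈ S → j ∈ S → i ≠ j → v i * v j = -(v j * v i)

lemma Supercommutes.mul_prod_eq_orderedInsert {A : Type*} [Ring A] {S : Finset ℕ} {v : ℕ → A}
    (hv : Supercommutes S v) (a : ℕ) (l : List ℕ) (ha : a ∉ l) (hl : l.Pairwise (· ≤ ·)) :
    v a * (l.map v).prod =
      (if a ∈ S then (-1) ^ l.countP (fun b => b ∈ S ∧ b < a) else 1 : ℤ) •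
        ((l.orderedInsert (· ≤ ·) a).map v).prod := by
  induction l with
  | nil => simp
  | cons b l ih =>
    rw [List.mem_cons, not_or] at ha
    rw [List.pairwise_cons] at hl
    by_cases hab : a ≤ b
    · have h0 : (b :: l).countP (fun c => c ∈ S ∧ c < a) = 0 := by
        rw [List.countP_eq_zero]
        intro c hc
        have : a ≤ c := by
          rcases List.mem_cons.1 hc with rfl | hc
          · exact hab
          · exact hab.trans (hl.1 c hc)
        simp [this]
      rw [h0, List.orderedInsert_cons_of_le _ _ hab]
      simp
    · have ih := ih ha.2 hl.2
      rw [List.orderedInsert_of_not_le _ _ hab, List.map_cons, List.prod_cons, List.map_cons,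
        List.prod_cons]
      by_cases haS : a ∈ S
      · by_cases hbS : b ∈ S
        · rw [← mul_assoc, hv.anticommute a b haS hbS ha.1, neg_mul, mul_assoc, ih,
            mul_smul_comm, List.countP_cons_of_pos (by simp [hbS, not_le.1 hab]), pow_succ]
          simp [haS]
        · rw [← mul_assoc, ← hv.commute b a hbS, mul_assoc, ih,
            mul_smul_comm, List.countP_cons_of_neg (by simp [hbS])]
      · rw [← mul_assoc, hv.commute a b haS, mul_assoc, ih]
        simp [haS]

lemma Supercommutes.prod_eq_insertionSort {A : Type*} [Ring A] {S : Finset ℕ} {v : ℕ → A}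
    (hv : Supercommutes S v) (l : List ℕ) (hl : l.Nodup) :
    (l.map v).prod = superSign S l • ((l.insertionSort (· ≤ ·)).map v).prod := by
  induction l with
  | nil => simp [superSign]
  | cons a l ih =>
    rw [List.nodup_cons] at hl
    rw [List.map_cons, List.prod_cons, ih hl.2, mul_smul_comm,
      hv.mul_prod_eq_orderedInsert a _ (by simpa using hl.1) (List.pairwise_insertionSort _ _),
      (List.perm_insertionSort _ l).countP_eq, superSign, smul_smul, List.insertionSort_cons,
      mul_comm]

lemma Supercommutes.prod_eq_range {A : Type*} [Ring A] {S : Finset ℕ} {v : ℕ → A}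
    (hv : Supercommutes S v) {m : ℕ} {l : List ℕ} (hl : l.Perm (List.range m)) :
    (l.map v).prod = superSign S l • ((List.range m).map v).prod := by
  rw [hv.prod_eq_insertionSort l (hl.nodup_iff.2 List.nodup_range)]
  congr 4
  exact ((List.perm_insertionSort _ l).trans hl).eq_of_pairwise'
    (List.pairwise_insertionSort _ _) (List.pairwise_le_range)

lemma superSign_congr {S T : Finset ℕ} {l : List ℕ} (h : ∀ a ∈ l, a ∈ S ↔ a ∈ T) :
    superSign S l = superSign T l := by
  induction l with
  | nil => rfl
  | cons a l ih =>
    have hl : ∀ b ∈ l, b ∈ S ↔ b ∈ T := fun b hb => h b (List.mem_cons_of_mem _ hb)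
    have hc : l.countP (fun b => b ∈ S ∧ b < a) = l.countP (fun b => b ∈ T ∧ b < a) :=
      List.countP_congr fun b hb => by simp [hl b hb]
    simp only [superSign, ih hl, hc, h a List.mem_cons_self]

/-- The sign with respect to a set with an odd number of letters is an alternating sum of the
signs with respect to the sets obtained by removing one letter. -/
lemma sum_superSign_erase (S : Finset ℕ) (l : List ℕ) (hl : l.Nodup) :
    ∑ s ∈ l.toFinset ∩ S, (-1) ^ l.countP (fun b => b ∈ S ∧ b < s) * superSign (S.erase s) l =
      if Odd (l.countP (fun b => b ∈ S)) then superSign S l else 0 := by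
  induction l with
  | nil => simp
  | cons a l ih =>
    rw [List.nodup_cons] at hl
    have ih := ih hl.2
    by_cases ha : a ∈ S
    · rw [List.toFinset_cons, Finset.insert_inter_of_mem ha,
        Finset.sum_insert (by simp [hl.1])]
      have h1 : superSign (S.erase a) (a :: l) = superSign S l := by
        simp only [superSign, Finset.mem_erase, ne_eq, not_true_eq_false, false_and, if_false,
          one_mul]
        exact superSign_congr fun b hb => by
          simp [show b ≠ a from fun h => hl.1 (h ▸ hb)]
      have h2 : ∀ s ∈ l.toFinset ∩ S,
          (-1 : ℤ) ^ (a :: l).countP (fun b => b ∈ S ∧ b < s) * superSign (S.erase s) (a :: l) =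
          -(-1) ^ l.countP (fun b => b ∈ S ∧ b < a) *
            ((-1) ^ l.countP (fun b => b ∈ S ∧ b < s) * superSign (S.erase s) l) := by
        intro s hs
        rw [Finset.mem_inter, List.mem_toFinset] at hs
        have hsa : a ≠ s := fun h => hl.1 (h ▸ hs.1)
        have h3 := countP_erase hl.2 hs.1 hs.2 a
        rw [h3, List.countP_cons, superSign, if_pos (Finset.mem_erase.2 ⟨hsa, ha⟩)]
        rcases lt_or_gt_of_ne hsa with h | h
        · simp only [ha, h, h.not_gt, and_self, decide_true, if_true, if_false, pow_succ]
          ring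
        · simp only [h, h.not_gt, and_false, decide_false, if_true, if_false, pow_succ,
            Bool.false_eq_true]
          ring
      rw [Finset.sum_congr rfl h2, ← Finset.mul_sum, ih, h1]
      simp only [superSign, ha, List.countP_cons]
      by_cases ho : Odd (l.countP (fun b => b ∈ S))
      · simp [ho, Nat.odd_add_one]
      · simp [ho, Nat.odd_add_one]
    · rw [List.toFinset_cons, Finset.insert_inter_of_notMem ha]
      simpa [superSign, ha, List.countP_cons] using ih

/-- The multilinear monomial attached to a word. -/
noncomputable def wordMonomial (l : List ℕ) : FA := (l.map X).prod

lemma wordMonomial_append (l l' : List ℕ) :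
    wordMonomial (l ++ l') = wordMonomial l * wordMonomial l' := by
  simp [wordMonomial]

lemma lift_wordMonomial {A : Type*} [Ring A] (v : ℕ → A) (l : List ℕ) :
    FreeAlgebra.lift ℤ v (wordMonomial l) = (l.map v).prod := by
  rw [wordMonomial, map_list_prod, List.map_map]
  congr 2
  funext i
  exact FreeAlgebra.lift_ι_apply v i

/-- The additive subgroup generated by the monomials whose word is a rearrangement of `l`. -/
noncomputable def rearrangements (l : List ℕ) : AddSubgroup FA :=
  AddSubgroup.closure {w | ∃ l' : List ℕ, l'.Perm l ∧ w = wordMonomial l'}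

lemma wordMonomial_mem_rearrangements {l l' : List ℕ} (h : l'.Perm l) :
    wordMonomial l' ∈ rearrangements l :=
  AddSubgroup.subset_closure ⟨l', h, rfl⟩

lemma mul_mem_rearrangements {l l' : List ℕ} {f g : FA} (hf : f ∈ rearrangements l)
    (hg : g ∈ rearrangements l') : f * g ∈ rearrangements (l ++ l') := by
  induction hf using AddSubgroup.closure_induction with
  | mem x hx =>
    obtain ⟨k, hk, rfl⟩ := hx
    induction hg using AddSubgroup.closure_induction with
    | mem y hy =>
      obtain ⟨k', hk', rfl⟩ := hy
      rw [← wordMonomial_append]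
      exact wordMonomial_mem_rearrangements (hk.append hk')
    | zero => rw [mul_zero]; exact zero_mem _
    | add x y _ _ hx hy => rw [mul_add]; exact add_mem hx hy
    | neg x _ hx => rw [mul_neg]; exact neg_mem hx
  | zero => rw [zero_mul]; exact zero_mem _
  | add x y _ _ hx hy => rw [add_mul]; exact add_mem hx hy
  | neg x _ hx => rw [neg_mul]; exact neg_mem hx

lemma rearrangements_congr {l l' : List ℕ} (h : l.Perm l') :
    rearrangements l = rearrangements l' := by
  unfold rearrangements
  congr 1
  ext w
  exact ⟨fun ⟨k, hk, hw⟩ => ⟨k, hk.trans h, hw⟩, fun ⟨k, hk, hw⟩ => ⟨k, hk.trans h.symm, hw⟩⟩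

lemma Pn_eq_rearrangements (m : ℕ) : Pn m = rearrangements (List.range m) := by
  unfold Pn rearrangements
  congr 1
  ext w
  constructor
  · rintro ⟨σ, rfl⟩
    refine ⟨List.ofFn fun i => (σ i : ℕ), ?_, ?_⟩
    · have h := (σ.map_finRange_perm).map Fin.val
      rw [List.map_coe_finRange_eq_range, List.map_map] at h
      rwa [List.ofFn_eq_map]
    · rw [wordMonomial, List.map_ofFn]
      rfl
  · rintro ⟨l, hl, rfl⟩
    have hlen : l.length = m := by simpa using hl.length_eq
    subst hlen
    have hlt : ∀ i : Fin l.length, l.get i < l.length := fun i =>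
      List.mem_range.1 (hl.mem_iff.1 (l.get_mem i))
    have hinj : Function.Injective fun i : Fin l.length => (⟨l.get i, hlt i⟩ : Fin l.length) :=
      fun i j hij =>
        (List.nodup_iff_injective_get.1 (hl.nodup_iff.2 List.nodup_range)) (Fin.ext_iff.1 hij)
    refine ⟨Equiv.ofBijective _ (Finite.injective_iff_bijective.1 hinj), ?_⟩
    simp only [Equiv.ofBijective_apply, wordMonomial]
    conv_lhs => rw [← List.ofFn_get l, List.map_ofFn]
    rfl

/-- The additive functional on the free ring sending each word to its sign with respect to `S`. -/
noncomputable def signFunctional (S : Finset ℕ) : FA →+ ℤ :=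
  ((FreeAlgebra.basisFreeMonoid ℤ ℕ).constr ℤ fun w => superSign S w.toList).toAddMonoidHom

lemma signFunctional_wordMonomial (S : Finset ℕ) (l : List ℕ) :
    signFunctional S (wordMonomial l) = superSign S l := by
  have h : wordMonomial l = FreeAlgebra.basisFreeMonoid ℤ ℕ (FreeMonoid.ofList l) := by
    simp [FreeAlgebra.basisFreeMonoid, FreeAlgebra.equivMonoidAlgebraFreeMonoid, wordMonomial,
      FreeMonoid.lift_apply]
    exact (one_smul ℤ _).symm
  rw [h]
  exact (FreeAlgebra.basisFreeMonoid ℤ ℕ).constr_basis ℤ _ _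

lemma lift_eq_signFunctional_smul {A : Type*} [Ring A] {S : Finset ℕ} {v : ℕ → A}
    (hv : Supercommutes S v) {m : ℕ} {f : FA} (hf : f ∈ Pn m) :
    FreeAlgebra.lift ℤ v f = signFunctional S f • ((List.range m).map v).prod := by
  rw [Pn_eq_rearrangements] at hf
  induction hf using AddSubgroup.closure_induction with
  | mem x hx =>
    obtain ⟨l, hl, rfl⟩ := hx
    rw [lift_wordMonomial, signFunctional_wordMonomial, hv.prod_eq_range hl]
  | zero => simp
  | add x y _ _ hx hy => rw [map_add, map_add, hx, hy, add_smul]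
  | neg x _ hx => rw [map_neg, map_neg, hx, neg_smul]

/-- Expansion of a product of sums over the choices of summands. -/
lemma prod_map_add {A : Type*} [Ring A] (p q : ℕ → A) (l : List ℕ) (hl : l.Nodup) :
    (l.map fun i => p i + q i).prod =
      ∑ S ∈ l.toFinset.powerset, (l.map fun i => if i ∈ S then q i else p i).prod := by
  induction l with
  | nil => simp
  | cons a l ih =>
    rw [List.nodup_cons] at hl
    rw [List.toFinset_cons, Finset.sum_powerset_insert (by simpa using hl.1), List.map_cons,
      List.prod_cons, ih hl.2, add_mul, Finset.mul_sum, Finset.mul_sum]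
    congr 1
    · refine Finset.sum_congr rfl fun S hS => ?_
      have : a ∉ S := fun h => hl.1 (List.mem_toFinset.1 (Finset.mem_powerset.1 hS h))
      simp [this]
    · refine Finset.sum_congr rfl fun S hS => ?_
      rw [List.map_cons, List.prod_cons, if_pos (Finset.mem_insert_self a S)]
      congr 2
      refine List.map_congr_left fun i hi => ?_
      have : i ≠ a := fun h => hl.1 (h ▸ hi)
      simp [this]

lemma lift_add_eq_sum {A : Type*} [Ring A] (p q : ℕ → A) {m : ℕ} {f : FA} (hf : f ∈ Pn m) :
    FreeAlgebra.lift ℤ (fun i => p i + q i) f =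
      ∑ S ∈ (Finset.range m).powerset,
        FreeAlgebra.lift ℤ (fun i => if i ∈ S then q i else p i) f := by
  rw [Pn_eq_rearrangements] at hf
  induction hf using AddSubgroup.closure_induction with
  | mem x hx =>
    obtain ⟨l, hl, rfl⟩ := hx
    have h : l.toFinset = Finset.range m := by
      ext i
      rw [List.mem_toFinset, hl.mem_iff, List.mem_range, Finset.mem_range]
    simp only [lift_wordMonomial]
    rw [prod_map_add p q l (hl.nodup_iff.2 List.nodup_range), h]
  | zero => simp
  | add x y _ _ hx hy => simp only [map_add, hx, hy, Finset.sum_add_distrib]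
  | neg x _ hx => simp only [map_neg, hx, Finset.sum_neg_distrib]

/-- The functional of an odd set is an alternating sum of functionals of even sets. -/
lemma signFunctional_eq_sum_erase {S : Finset ℕ} {m : ℕ} (hS : S ⊆ Finset.range m)
    (hodd : Odd S.card) {f : FA} (hf : f ∈ Pn m) :
    signFunctional S f = ∑ s ∈ S, (-1) ^ (List.range m).countP (fun b => b ∈ S ∧ b < s) *
      signFunctional (S.erase s) f := by
  rw [Pn_eq_rearrangements] at hf
  induction hf using AddSubgroup.closure_induction with
  | mem x hx =>
    obtain ⟨l, hl, rfl⟩ := hx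
    have hn : l.Nodup := hl.nodup_iff.2 List.nodup_range
    have h : l.toFinset ∩ S = S := by
      refine Finset.inter_eq_right.2 fun i hi => ?_
      rw [List.mem_toFinset, hl.mem_iff, List.mem_range]
      exact Finset.mem_range.1 (hS hi)
    have hc : l.countP (fun b => b ∈ S) = S.card := by
      rw [List.countP_eq_length_filter, ← List.toFinset_card_of_nodup (hn.filter _),
        List.toFinset_filter, ← h]
      congr 1
      ext i
      simp
    have key := sum_superSign_erase S l hn
    rw [h, hc, if_pos hodd] at key
    simp only [signFunctional_wordMonomial, ← key, hl.countP_eq]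
  | zero => simp
  | add x y _ _ hx hy => simp only [map_add, hx, hy, mul_add, Finset.sum_add_distrib]
  | neg x _ hx => simp only [map_neg, hx, mul_neg, Finset.sum_neg_distrib]

section Exterior

variable {R M : Type*} [CommRing R] [AddCommGroup M] [Module R M]

lemma ExteriorAlgebra.ι_mul_ι_eq_neg (x y : M) :
    ExteriorAlgebra.ι R x * ExteriorAlgebra.ι R y =
      -(ExteriorAlgebra.ι R y * ExteriorAlgebra.ι R x) :=
  eq_neg_of_add_eq_zero_left (ExteriorAlgebra.ι_add_mul_swap x y)

lemma ExteriorAlgebra.mem_center_of_commute_ι {x : ExteriorAlgebra R M}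
    (h : ∀ m, ExteriorAlgebra.ι R m * x = x * ExteriorAlgebra.ι R m) :
    x ∈ Subalgebra.center R (ExteriorAlgebra R M) := by
  rw [Subalgebra.mem_center_iff]
  intro b
  induction b using ExteriorAlgebra.induction with
  | algebraMap r => exact Algebra.commutes r x
  | ι m => exact h m
  | mul a b ha hb => rw [mul_assoc, hb, ← mul_assoc, ha, mul_assoc]
  | add a b ha hb => rw [add_mul, ha, hb, mul_add]

lemma ExteriorAlgebra.ι_mul_ι_mem_center (x y : M) :
    ExteriorAlgebra.ι R x * ExteriorAlgebra.ι R y ∈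
      Subalgebra.center R (ExteriorAlgebra R M) :=
  mem_center_of_commute_ι fun m => by
    rw [← mul_assoc, ι_mul_ι_eq_neg m x, neg_mul, mul_assoc, ι_mul_ι_eq_neg m y, mul_neg, neg_neg,
      mul_assoc]

variable (R M) in
/-- The elements of odd degree: sums of products of central elements and vectors. -/
def ExteriorAlgebra.oddPart : AddSubgroup (ExteriorAlgebra R M) :=
  AddSubgroup.closure
    {y | ∃ c ∈ Subalgebra.center R (ExteriorAlgebra R M), ∃ m, y = c * ExteriorAlgebra.ι R m}

lemma ExteriorAlgebra.center_mul_mem_oddPart {c x : ExteriorAlgebra R M}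
    (hc : c ∈ Subalgebra.center R (ExteriorAlgebra R M)) (hx : x ∈ oddPart R M) :
    c * x ∈ oddPart R M := by
  induction hx using AddSubgroup.closure_induction with
  | mem x hx =>
    obtain ⟨d, hd, m, rfl⟩ := hx
    rw [← mul_assoc]
    exact AddSubgroup.subset_closure ⟨c * d, mul_mem hc hd, m, rfl⟩
  | zero => rw [mul_zero]; exact zero_mem _
  | add x y _ _ hx hy => rw [mul_add]; exact add_mem hx hy
  | neg x _ hx => rw [mul_neg]; exact neg_mem hx

lemma ExteriorAlgebra.oddPart_mul_mem_center {x y : ExteriorAlgebra R M}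
    (hx : x ∈ oddPart R M) (hy : y ∈ oddPart R M) :
    x * y ∈ Subalgebra.center R (ExteriorAlgebra R M) := by
  induction hx using AddSubgroup.closure_induction with
  | mem x hx =>
    obtain ⟨c, hc, m, rfl⟩ := hx
    induction hy using AddSubgroup.closure_induction with
    | mem y hy =>
      obtain ⟨d, hd, k, rfl⟩ := hy
      rw [mul_assoc, ← mul_assoc (ι R m), Subalgebra.mem_center_iff.1 hd (ι R m), mul_assoc d]
      exact mul_mem hc (mul_mem hd (ι_mul_ι_mem_center m k))
    | zero => rw [mul_zero]; exact zero_mem _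
    | add x y _ _ hx hy => rw [mul_add]; exact add_mem hx hy
    | neg x _ hx => rw [mul_neg]; exact neg_mem hx
  | zero => rw [zero_mul]; exact zero_mem _
  | add x y _ _ hx hy => rw [add_mul]; exact add_mem hx hy
  | neg x _ hx => rw [neg_mul]; exact neg_mem hx

lemma ExteriorAlgebra.oddPart_mul_eq_neg {x y : ExteriorAlgebra R M}
    (hx : x ∈ oddPart R M) (hy : y ∈ oddPart R M) : x * y = -(y * x) := by
  induction hx using AddSubgroup.closure_induction with
  | mem x hx =>
    obtain ⟨c, hc, m, rfl⟩ := hx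
    induction hy using AddSubgroup.closure_induction with
    | mem y hy =>
      obtain ⟨d, hd, k, rfl⟩ := hy
      rw [mul_assoc, ← mul_assoc (ι R m), Subalgebra.mem_center_iff.1 hd (ι R m), mul_assoc d,
        mul_assoc d, ← mul_assoc (ι R k), Subalgebra.mem_center_iff.1 hc (ι R k), mul_assoc c,
        ι_mul_ι_eq_neg m k, ← mul_assoc, ← mul_assoc, Subalgebra.mem_center_iff.1 hd c, mul_neg]
    | zero => simp
    | add x y _ _ hx hy => rw [mul_add, hx, hy, add_mul, neg_add]
    | neg x _ hx => rw [mul_neg, hx, neg_mul]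
  | zero => simp
  | add x y _ _ hx hy => rw [add_mul, hx, hy, mul_add, neg_add]
  | neg x _ hx => rw [neg_mul, hx, mul_neg]

lemma ExteriorAlgebra.exists_eq_center_add_odd (x : ExteriorAlgebra R M) :
    ∃ p q, x = p + q ∧ p ∈ Subalgebra.center R (ExteriorAlgebra R M) ∧ q ∈ oddPart R M := by
  induction x using ExteriorAlgebra.induction with
  | algebraMap r =>
    exact ⟨algebraMap R _ r, 0, (add_zero _).symm, Subalgebra.algebraMap_mem _ r, zero_mem _⟩
  | ι m =>
    exact ⟨0, ι R m, (zero_add _).symm, zero_mem _,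
      AddSubgroup.subset_closure ⟨1, one_mem _, m, (one_mul _).symm⟩⟩
  | mul a b ha hb =>
    obtain ⟨p, q, rfl, hp, hq⟩ := ha
    obtain ⟨p', q', rfl, hp', hq'⟩ := hb
    refine ⟨p * p' + q * q', p * q' + p' * q, ?_,
      add_mem (mul_mem hp hp') (oddPart_mul_mem_center hq hq'),
      add_mem (center_mul_mem_oddPart hp hq') (center_mul_mem_oddPart hp' hq)⟩
    rw [← Subalgebra.mem_center_iff.1 hp' q]
    noncomm_ring
  | add a b ha hb =>
    obtain ⟨p, q, rfl, hp, hq⟩ := ha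
    obtain ⟨p', q', rfl, hp', hq'⟩ := hb
    exact ⟨p + p', q + q', add_add_add_comm _ _ _ _, add_mem hp hp', add_mem hq hq'⟩

lemma Supercommutes.of_center_of_odd {p q : ℕ → ExteriorAlgebra R M}
    (hp : ∀ i, p i ∈ Subalgebra.center R (ExteriorAlgebra R M))
    (hq : ∀ i, q i ∈ ExteriorAlgebra.oddPart R M) (S : Finset ℕ) :
    Supercommutes S fun i => if i ∈ S then q i else p i where
  commute i j hi := by
    simp only [hi, if_false]
    exact (Subalgebra.mem_center_iff.1 (hp i) _).symm
  anticommute i j hi hj _ := by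
    simp only [hi, hj, if_true]
    exact ExteriorAlgebra.oddPart_mul_eq_neg (hq i) (hq j)

end Exterior

section Generators

variable (R : Type*) [CommRing R]

/-- The standard generators of the Grassmann algebra. -/
noncomputable def grassmannGen (i : ℕ) : ExteriorAlgebra R (ℕ →₀ R) :=
  ExteriorAlgebra.ι R (Finsupp.single i 1)

/-- The substitution by generators for the letters in `S` and by `1` for all other letters. -/
noncomputable def grassmannSubst (S : Finset ℕ) (i : ℕ) : ExteriorAlgebra R (ℕ →₀ R) :=
  if i ∈ S then grassmannGen R i else 1

lemma supercommutes_grassmannSubst (S : Finset ℕ) : Supercommutes S (grassmannSubst R S) :=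
  Supercommutes.of_center_of_odd (p := fun _ => 1) (fun _ => one_mem _)
    (fun i => AddSubgroup.subset_closure
      ⟨1, one_mem _, Finsupp.single i 1, (one_mul _).symm⟩) S

/-- A functional taking the value `1` on the product of a given list of distinct generators. -/
lemma exists_functional_prod_grassmannGen (l : List ℕ) (hl : l.Nodup) :
    ∃ D : ExteriorAlgebra R (ℕ →₀ R) →ₗ[R] R, D (l.map (grassmannGen R)).prod = 1 := by
  let g : (ℕ →₀ R) →ₗ[R] (Fin l.length → R) := LinearMap.pi fun j => Finsupp.lapply (l.get j)
  let φ : ∀ i, (ℕ →₀ R) [⋀^Fin i]→ₗ[R] R :=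
    Pi.single l.length (Matrix.detRowAlternating.compLinearMap g)
  refine ⟨ExteriorAlgebra.liftAlternating φ, ?_⟩
  have h : (l.map (grassmannGen R)).prod =
      ExteriorAlgebra.ιMulti R l.length fun i => Finsupp.single (l.get i) 1 := by
    rw [ExteriorAlgebra.ιMulti_apply]
    conv_lhs => rw [← List.ofFn_get l, List.map_ofFn]
    rfl
  rw [h, ExteriorAlgebra.liftAlternating_apply_ιMulti]
  simp only [φ, Pi.single_eq_same, AlternatingMap.compLinearMap_apply]
  have h1 : (fun i => g (Finsupp.single (l.get i) 1)) = (1 : Matrix _ _ R) := by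
    ext i j
    simp [g, Matrix.one_apply, Finsupp.single_apply, hl.getElem_inj_iff, Fin.ext_iff]
  have h2 := congrArg Matrix.det h1
  rw [Matrix.det_one] at h2
  exact h2

lemma prod_filter_eq_prod_ite {A : Type*} [Monoid A] (S : Finset ℕ) (v : ℕ → A) (l : List ℕ) :
    ((l.filter (· ∈ S)).map v).prod = (l.map fun i => if i ∈ S then v i else 1).prod := by
  induction l with
  | nil => rfl
  | cons a l ih => by_cases h : a ∈ S <;> simp [h, ih]

lemma exists_functional_grassmannSubst (S : Finset ℕ) (m : ℕ) :
    ∃ D : ExteriorAlgebra R (ℕ →₀ R) →ₗ[R] R,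
      D ((List.range m).map (grassmannSubst R S)).prod = 1 := by
  obtain ⟨D, hD⟩ := exists_functional_prod_grassmannGen R ((List.range m).filter (· ∈ S))
    (List.nodup_range.filter _)
  refine ⟨D, ?_⟩
  rw [prod_filter_eq_prod_ite] at hD
  exact hD

/-- A multilinear polynomial is an identity of the Grassmann algebra if and only if its
sign functionals with respect to all sets of even cardinality vanish in `R`. -/
lemma mem_IdA_iff {m : ℕ} {f : FA} (hf : f ∈ Pn m) :
    f ∈ IdA (ExteriorAlgebra R (ℕ →₀ R)) ↔
      ∀ S ⊆ Finset.range m, Even S.card → (signFunctional S f : R) = 0 := by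
  constructor
  · intro h S _ _
    obtain ⟨D, hD⟩ := exists_functional_grassmannSubst R S m
    have h0 := h (grassmannSubst R S)
    rw [lift_eq_signFunctional_smul (supercommutes_grassmannSubst R S) hf] at h0
    have h1 := congrArg D h0
    rwa [map_zsmul, hD, map_zero, zsmul_one] at h1
  · intro h
    have hall : ∀ S ⊆ Finset.range m, (signFunctional S f : R) = 0 := by
      intro S hS
      rcases Nat.even_or_odd S.card with he | ho
      · exact h S hS he
      · rw [signFunctional_eq_sum_erase hS ho hf]
        push_cast
        refine Finset.sum_eq_zero fun s hs => ?_
        rw [h (S.erase s) ((Finset.erase_subset s S).trans hS), mul_zero]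
        rw [Finset.card_erase_of_mem hs]
        exact Nat.Odd.sub_odd ho odd_one
    intro v
    choose p q hpq hp hq using fun i => ExteriorAlgebra.exists_eq_center_add_odd (v i)
    rw [funext hpq, lift_add_eq_sum p q hf]
    refine Finset.sum_eq_zero fun S hS => ?_
    rw [lift_eq_signFunctional_smul (Supercommutes.of_center_of_odd hp hq S) hf,
      ← Int.cast_smul_eq_zsmul R, hall S (Finset.mem_powerset.1 hS), zero_smul]

end Generators

/-- The product of the commutators of consecutive pairs of letters of a word. -/
noncomputable def pairCommutators : List ℕ → FA
  | a :: b :: l => (X a * X b - X b * X a) * pairCommutators l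
  | _ => 1

lemma pairCommutators_mem_rearrangements (l : List ℕ) (h : Even l.length) :
    pairCommutators l ∈ rearrangements l := by
  induction l using List.twoStepInduction with
  | nil => exact wordMonomial_mem_rearrangements (List.Perm.refl [])
  | singleton a => simp at h
  | cons_cons a b l ih =>
    have hl : Even l.length := by simpa [Nat.even_add_one] using h
    have hab : X a * X b - X b * X a ∈ rearrangements [a, b] := by
      have h1 : wordMonomial [a, b] ∈ rearrangements [a, b] :=
        wordMonomial_mem_rearrangements (List.Perm.refl _)
      have h2 : wordMonomial [b, a] ∈ rearrangements [a, b] :=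
        wordMonomial_mem_rearrangements (List.Perm.swap a b [])
      simpa [wordMonomial] using sub_mem h1 h2
    have h3 := mul_mem_rearrangements hab (ih hl)
    rw [List.cons_append, List.cons_append, List.nil_append] at h3
    rwa [pairCommutators]

lemma lift_pairCommutators_cons_cons {A : Type*} [Ring A] (v : ℕ → A) (a b : ℕ) (l : List ℕ) :
    FreeAlgebra.lift ℤ v (pairCommutators (a :: b :: l)) =
      (v a * v b - v b * v a) * FreeAlgebra.lift ℤ v (pairCommutators l) := by
  simp only [pairCommutators, map_mul, map_sub, X, FreeAlgebra.lift_ι_apply]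

lemma Supercommutes.lift_pairCommutators_eq_zero {A : Type*} [Ring A] {S : Finset ℕ} {v : ℕ → A}
    (hv : Supercommutes S v) :
    ∀ l : List ℕ, Even l.length → (∃ a ∈ l, a ∉ S) →
      FreeAlgebra.lift ℤ v (pairCommutators l) = 0
  | [], _, h => by simp at h
  | [_], h, _ => by simp at h
  | a :: b :: l, h, ⟨c, hc, hcS⟩ => by
    have hl : Even l.length := by simpa [Nat.even_add_one] using h
    rw [lift_pairCommutators_cons_cons]
    rcases List.mem_cons.1 hc with rfl | hc
    · rw [hv.commute c b hcS, sub_self, zero_mul]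
    rcases List.mem_cons.1 hc with rfl | hc
    · rw [hv.commute c a hcS, sub_self, zero_mul]
    · rw [hv.lift_pairCommutators_eq_zero l hl ⟨c, hc, hcS⟩, mul_zero]

lemma Supercommutes.exists_lift_pairCommutators {A : Type*} [Ring A] {S : Finset ℕ} {v : ℕ → A}
    (hv : Supercommutes S v) :
    ∀ l : List ℕ, Even l.length → l.Nodup → (∀ a ∈ l, a ∈ S) →
      ∃ k : ℕ, FreeAlgebra.lift ℤ v (pairCommutators l) = (2 : ℤ) ^ k • (l.map v).prod
  | [], _, _, _ => ⟨0, by simp [pairCommutators]⟩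
  | [_], h, _, _ => by simp at h
  | a :: b :: l, h, hn, hS => by
    have hl : Even l.length := by simpa [Nat.even_add_one] using h
    have hab : b ≠ a := fun h => by simp [h] at hn
    obtain ⟨k, hk⟩ := hv.exists_lift_pairCommutators l hl hn.of_cons.of_cons
      fun c hc => hS c (by simp [hc])
    refine ⟨k + 1, ?_⟩
    rw [lift_pairCommutators_cons_cons, hk, hv.anticommute b a (hS b (by simp)) (hS a (by simp)) hab,
      sub_neg_eq_add, ← two_zsmul, smul_mul_smul_comm, pow_succ', List.map_cons, List.map_cons,
      List.prod_cons, List.prod_cons, mul_assoc]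

/-- For each set of even cardinality there is a multilinear polynomial on which its functional is
a power of `2`, and on which the functionals of all sets not containing it vanish. -/
lemma exists_signFunctional_triangular {m : ℕ} {T : Finset ℕ} (hT : T ⊆ Finset.range m)
    (heven : Even T.card) :
    ∃ f ∈ Pn m, (∃ k : ℕ, signFunctional T f = 2 ^ k) ∧
      ∀ S, ¬ T ⊆ S → signFunctional S f = 0 := by
  set t := (List.range m).filter (· ∈ T) with ht
  set r := (List.range m).filter (fun i => ¬ (i ∈ T)) with hr
  have hmem : ∀ i, i ∈ t ↔ i ∈ T := fun i => by
    simp only [ht, List.mem_filter, List.mem_range, decide_eq_true_eq, and_iff_right_iff_imp]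
    exact fun h => Finset.mem_range.1 (hT h)
  have hn : t.Nodup := List.nodup_range.filter _
  have hlen : Even t.length := by
    rw [← List.toFinset_card_of_nodup hn]
    convert heven
    ext i
    rw [List.mem_toFinset, hmem]
  have hf : wordMonomial r * pairCommutators t ∈ Pn m := by
    have hperm : (r ++ t).Perm (List.range m) := by
      refine List.perm_append_comm.trans ?_
      have := List.filter_append_perm (fun i => decide (i ∈ T)) (List.range m)
      simpa [ht, hr] using this
    rw [Pn_eq_rearrangements, ← rearrangements_congr hperm]
    exact mul_mem_rearrangements (wordMonomial_mem_rearrangements (List.Perm.refl _))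
      (pairCommutators_mem_rearrangements t hlen)
  refine ⟨_, hf, ?_, fun S hS => ?_⟩
  · obtain ⟨D, hD⟩ := exists_functional_grassmannSubst ℤ T m
    have hv := supercommutes_grassmannSubst ℤ T
    obtain ⟨k, hk⟩ := hv.exists_lift_pairCommutators t hlen hn fun a ha => (hmem a).1 ha
    have h := lift_eq_signFunctional_smul hv hf
    have hr1 : (r.map (grassmannSubst ℤ T)).prod = 1 := by
      refine List.prod_eq_one fun x hx => ?_
      obtain ⟨i, hi, rfl⟩ := List.mem_map.1 hx
      have : i ∉ T := by simpa using (List.mem_filter.1 hi).2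
      simp [grassmannSubst, this]
    have ht1 : (t.map (grassmannSubst ℤ T)).prod =
        ((List.range m).map (grassmannSubst ℤ T)).prod := by
      rw [ht, prod_filter_eq_prod_ite]
      congr 2
      funext i
      simp only [grassmannSubst]
      split_ifs <;> rfl
    rw [map_mul, lift_wordMonomial, hr1, one_mul, hk, ht1] at h
    have h1 := congrArg D h
    rw [map_zsmul, map_zsmul, hD, zsmul_one, zsmul_one] at h1
    exact ⟨k, by simpa using h1.symm⟩
  · obtain ⟨D, hD⟩ := exists_functional_grassmannSubst ℤ S m
    have hv := supercommutes_grassmannSubst ℤ S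
    have h := lift_eq_signFunctional_smul hv hf
    obtain ⟨a, haT, haS⟩ := Finset.not_subset.1 hS
    rw [map_mul, hv.lift_pairCommutators_eq_zero t hlen ⟨a, (hmem a).2 haT, haS⟩, mul_zero] at h
    have h1 := congrArg D h
    rw [map_zsmul, hD, zsmul_one, map_zero] at h1
    simpa using h1.symm

lemma exists_two_pow_smul_mem_of_triangular {ι : Type*} [Finite ι] [PartialOrder ι]
    (H : AddSubgroup (ι → ℤ))
    (hH : ∀ t, ∃ h ∈ H, (∃ k : ℕ, h t = 2 ^ k) ∧ ∀ s, ¬ t ≤ s → h s = 0) (g : ι → ℤ) :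
    ∃ k : ℕ, (2 : ℤ) ^ k • g ∈ H := by
  classical
  have := Fintype.ofFinite ι
  let U : AddSubgroup (ι → ℤ) :=
    { carrier := {g | ∃ k : ℕ, (2 : ℤ) ^ k • g ∈ H}
      zero_mem' := ⟨0, by simp⟩
      add_mem' := by
        rintro a b ⟨k, hk⟩ ⟨j, hj⟩
        refine ⟨k + j, ?_⟩
        rw [smul_add, pow_add]
        refine add_mem ?_ ?_
        · rw [mul_comm, mul_smul]
          exact zsmul_mem hk _
        · rw [mul_smul]
          exact zsmul_mem hj _
      neg_mem' := by
        rintro a ⟨k, hk⟩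
        exact ⟨k, by rw [smul_neg]; exact neg_mem hk⟩ }
  have hHU : H ≤ U := fun h hh => ⟨0, by simpa using hh⟩
  have hU : ∀ (g : ι → ℤ) (k : ℕ), (2 : ℤ) ^ k • g ∈ U → g ∈ U := by
    rintro g k ⟨j, hj⟩
    exact ⟨j + k, by rwa [pow_add, mul_smul]⟩
  have hsingle : ∀ t, Pi.single t (1 : ℤ) ∈ U := by
    intro t
    induction t using WellFoundedGT.induction with
    | ind t ih =>
      obtain ⟨h, hh, ⟨k, hk⟩, h0⟩ := hH t
      refine hU _ k ?_
      have hsum : ∑ s ∈ Finset.univ.erase t, Pi.single s (h s) ∈ U := by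
        refine sum_mem fun s hs => ?_
        by_cases hts : t ≤ s
        · have := zsmul_mem (ih s (lt_of_le_of_ne hts (Finset.ne_of_mem_erase hs).symm)) (h s)
          rwa [← Pi.single_smul, smul_eq_mul, mul_one] at this
        · rw [h0 s hts, Pi.single_zero]
          exact zero_mem _
      have key := Finset.add_sum_erase Finset.univ (fun s => Pi.single s (h s))
        (Finset.mem_univ t)
      rw [Finset.univ_sum_single h, hk] at key
      rw [← Pi.single_smul, smul_eq_mul, mul_one, eq_sub_of_add_eq key]
      exact sub_mem (hHU hh) hsum
  suffices g ∈ U from this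
  rw [← Finset.univ_sum_single g]
  refine sum_mem fun s _ => ?_
  have := zsmul_mem (hsingle s) (g s)
  rwa [← Pi.single_smul, smul_eq_mul, mul_one] at this

lemma nonempty_addEquiv_of_two_pow_smul_mem {ι : Type*} [Finite ι] (H : AddSubgroup (ι → ℤ))
    (hH : ∀ g, ∃ k : ℕ, (2 : ℤ) ^ k • g ∈ H) : Nonempty (H ≃+ (ι → ℤ)) := by
  classical
  have := Fintype.ofFinite ι
  let N : Submodule ℤ (ι → ℤ) := AddSubgroup.toIntSubmodule H
  choose k hk using hH
  let b : ι → N := fun i => ⟨(2 : ℤ) ^ k (Pi.single i 1) • Pi.single i 1, hk _⟩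
  have hb : LinearIndependent ℤ b := by
    refine LinearIndependent.of_comp N.subtype ?_
    rw [Fintype.linearIndependent_iff]
    intro c hc i
    have := congrFun hc i
    simpa [b, Finset.sum_apply, Pi.single_apply] using this
  have h1 : Fintype.card ι ≤ Module.finrank ℤ N := hb.fintype_card_le_finrank
  have h2 : Module.finrank ℤ N ≤ Fintype.card ι := by
    simpa using Submodule.finrank_le N
  obtain ⟨e⟩ : Nonempty (N ≃ₗ[ℤ] (ι → ℤ)) :=
    FiniteDimensional.nonempty_linearEquiv_of_finrank_eq (by simpa using le_antisymm h2 h1)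
  exact ⟨e.toAddEquiv⟩

/-- The subsets of even cardinality of `{0, …, m - 1}`. -/
abbrev EvenSubset (m : ℕ) : Type :=
  {S : Finset ℕ // S ∈ (Finset.range m).powerset.filter fun S => Even S.card}

lemma card_evenSubset (n : ℕ) : Nat.card (EvenSubset (n + 1)) = 2 ^ n := by
  rw [Nat.card_eq_fintype_card, Fintype.card_coe]
  have h1 := Finset.card_filter_add_card_filter_not (s := (Finset.range (n + 1)).powerset)
    (fun S : Finset ℕ => Even S.card)
  have h2 := Finset.sum_powerset_neg_one_pow_card_of_nonempty
    (Finset.nonempty_range_add_one (n := n))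
  rw [← Finset.sum_filter_add_sum_filter_not _ (fun S : Finset ℕ => Even S.card),
    Finset.sum_congr rfl (g := fun _ => (1 : ℤ))
      (fun S hS => Even.neg_one_pow (Finset.mem_filter.1 hS).2)] at h2
  have h3 : ∀ S ∈ (Finset.range (n + 1)).powerset.filter fun S => ¬ Even S.card,
      (-1 : ℤ) ^ S.card = -1 := fun S hS =>
    Odd.neg_one_pow (Nat.not_even_iff_odd.1 (Finset.mem_filter.1 hS).2)
  rw [Finset.sum_congr rfl h3] at h2
  rw [Finset.card_powerset, Finset.card_range, pow_succ] at h1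
  simp only [Finset.sum_const, nsmul_eq_mul, mul_one, mul_neg] at h2
  omega

/-- The tuple of all sign functionals of sets of even cardinality. -/
noncomputable def evenSigns (m : ℕ) : Pn m →+ (EvenSubset m → ℤ) :=
  AddMonoidHom.pi fun S => (signFunctional S).comp (Pn m).subtype

lemma exists_two_pow_smul_mem_range_evenSigns (m : ℕ) (g : EvenSubset m → ℤ) :
    ∃ k : ℕ, (2 : ℤ) ^ k • g ∈ (evenSigns m).range := by
  refine exists_two_pow_smul_mem_of_triangular _ (fun T => ?_) g
  obtain ⟨hT, heven⟩ := Finset.mem_filter.1 T.2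
  obtain ⟨f, hf, hk, h0⟩ := exists_signFunctional_triangular (Finset.mem_powerset.1 hT) heven
  exact ⟨evenSigns m ⟨f, hf⟩, ⟨_, rfl⟩, hk, fun S hS => h0 S hS⟩

/-- The tuple of all sign functionals of sets of even cardinality, modulo `ℓ`. -/
noncomputable def evenSignsMod (ℓ m : ℕ) : Pn m →+ (EvenSubset m → ZMod ℓ) :=
  ((Int.castAddHom (ZMod ℓ)).compLeft (EvenSubset m)).comp (evenSigns m)

lemma ker_evenSignsMod (R : Type*) [CommRing R] (ℓ : ℕ) [CharP R ℓ] (m : ℕ) :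
    (evenSignsMod ℓ m).ker = (IdA (ExteriorAlgebra R (ℕ →₀ R))).addSubgroupOf (Pn m) := by
  ext f
  rw [AddMonoidHom.mem_ker, AddSubgroup.mem_addSubgroupOf, mem_IdA_iff R f.2, funext_iff]
  have h : ∀ z : ℤ, (z : ZMod ℓ) = 0 ↔ (z : R) = 0 := fun z => by
    rw [CharP.intCast_eq_zero_iff (ZMod ℓ) ℓ, CharP.intCast_eq_zero_iff R ℓ]
  constructor
  · intro hf S hS he
    exact (h _).1 (hf ⟨S, Finset.mem_filter.2 ⟨Finset.mem_powerset.2 hS, he⟩⟩)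
  · intro hf S
    obtain ⟨hS, he⟩ := Finset.mem_filter.1 S.2
    exact (h _).2 (hf S (Finset.mem_powerset.1 hS) he)

lemma evenSignsMod_surjective {ℓ : ℕ} (hℓ : Odd ℓ) (m : ℕ) :
    Function.Surjective (evenSignsMod ℓ m) := by
  intro y
  have h2 : IsUnit (2 : ZMod ℓ) := by
    have := (ZMod.isUnit_iff_coprime 2 ℓ).2 (Nat.coprime_two_left.2 hℓ)
    exact_mod_cast this
  obtain ⟨k, f, hf⟩ : ∃ k : ℕ, ∃ f, evenSignsMod ℓ m f = (2 : ZMod ℓ) ^ k • y := by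
    choose g hg using fun S => ZMod.intCast_surjective (y S)
    obtain ⟨k, f, hf⟩ := exists_two_pow_smul_mem_range_evenSigns m g
    refine ⟨k, f, funext fun S => ?_⟩
    have := congrArg (Int.cast : ℤ → ZMod ℓ) (congrFun hf S)
    simpa [evenSignsMod, hg] using this
  obtain ⟨u, hu⟩ := h2.pow k
  obtain ⟨c, hc⟩ := ZMod.intCast_surjective (↑u⁻¹ : ZMod ℓ)
  refine ⟨c • f, ?_⟩
  rw [map_zsmul, hf, ← Int.cast_smul_eq_zsmul (ZMod ℓ), hc, ← hu, smul_smul, Units.inv_mul,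
    one_smul]

lemma nonempty_range_evenSignsMod_addEquiv {ℓ : ℕ} (hℓ : ℓ = 0 ∨ Odd ℓ) (m : ℕ) :
    Nonempty ((evenSignsMod ℓ m).range ≃+ (EvenSubset m → ZMod ℓ)) := by
  rcases hℓ with rfl | hℓ
  · refine nonempty_addEquiv_of_two_pow_smul_mem (evenSignsMod 0 m).range fun g => ?_
    obtain ⟨k, f, hf⟩ := exists_two_pow_smul_mem_range_evenSigns m g
    exact ⟨k, f, hf⟩
  · rw [AddMonoidHom.range_eq_top.2 (evenSignsMod_surjective hℓ m)]
    exact ⟨AddSubgroup.topEquiv⟩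

theorem stmt_18 (R : Type) [CommRing R] (ℓ : ℕ) (hR : CharP R ℓ) (hℓ : ℓ = 0 ∨ Odd ℓ)
    (n : ℕ) :
    Nonempty ((Pn (n + 1) ⧸
        (IdA (ExteriorAlgebra R (ℕ →₀ R))).addSubgroupOf (Pn (n + 1))) ≃+
      (Fin (2 ^ n) → ZMod ℓ)) := by
  obtain ⟨e⟩ := nonempty_range_evenSignsMod_addEquiv hℓ (n + 1)
  let σ : Fin (2 ^ n) ≃ EvenSubset (n + 1) :=
    (finCongr (card_evenSubset n).symm).trans (Finite.equivFin _).symm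
  exact ⟨(QuotientAddGroup.quotientAddEquivOfEq (ker_evenSignsMod R ℓ (n + 1)).symm).trans
    ((QuotientAddGroup.quotientKerEquivRange _).trans
      (e.trans (LinearEquiv.funCongrLeft ℤ (ZMod ℓ) σ).toAddEquiv))⟩
end
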